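/- Let G act on a set X such that the action is 3-sharp. Let a ∈ G have order 3 with a • x ≠ x for all x ∈ X, and let t ∈ G have order 2 fixing exactly one point x₀ ∈ X. Then for every subset S ⊆ X with exactly 3 elements satisfying a • S = S and t • S = S, one has S = {x₀, a • x₀, a² • x₀}. -/

import Mathlib

open Pointwise

/-- An action is 3-sharp if every element fixing three pairwise distinct points is trivial. -/
def ThreeSharp (G X : Type*) [Group G] [MulAction G X] : Prop :=
  ∀ g : G, ∀ x y z : X, x ≠ y → x ≠ z → y ≠ z →
    g • x = x → g • y = y → g • z = z → g = 1

/-!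
The fixed points of an element `t` of `q`-power order on a finite invariant set `S` are congruent
to `#S` modulo `q`, so `t` fixes a point of `S` as soon as `q ∤ #S`. If `x₀` is the only fixed point
of `t`, then `x₀ ∈ S`, and the cycle of `x₀` under `a` is contained in `S`. When that cycle has at
least as many points as `S`, it is all of `S`.
-/

theorem exists_mem_smul_eq_self_of_not_dvd_ncard {G X : Type*} [Group G] [MulAction G X]
    {q n : ℕ} [Fact q.Prime] {t : G} (ht : t ^ q ^ n = 1) {S : Set X} (htS : t • S = S)
    (hS : ¬q ∣ S.ncard) : ∃ x ∈ S, t • x = x := by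
  have hfin : S.Finite := Set.finite_of_ncard_ne_zero fun h ↦ hS (h ▸ dvd_zero q)
  have := hfin.fintype
  let σ : Equiv.Perm S := (MulAction.toPerm t).subtypePerm
    (MulAction.mem_stabilizer_set.mp (MulAction.mem_stabilizer_iff.mpr htS))
  have hσ : σ ^ q ^ n = 1 := by
    ext x
    simp [σ, Equiv.Perm.subtypePerm_pow, ← MulAction.toPermHom_apply, ← map_pow, ht]
  have hcard : ¬q ∣ Fintype.card S := by
    rwa [← Nat.card_eq_fintype_card, Nat.card_coe_set_eq]
  obtain ⟨x, hx⟩ := Equiv.Perm.exists_fixed_point_of_prime hcard hσ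
  exact ⟨x, x.2, congrArg Subtype.val hx⟩

theorem image_iterate_Iio_minimalPeriod_eq {X : Type*} {f : X → X} {S : Set X} {x : X}
    (hfin : S.Finite) (hf : Set.MapsTo f S S) (hx : x ∈ S)
    (hcard : S.ncard ≤ Function.minimalPeriod f x) :
    (f^[·] x) '' Set.Iio (Function.minimalPeriod f x) = S := by
  refine Set.eq_of_subset_of_ncard_le ?_ ?_ hfin
  · rintro _ ⟨i, -, rfl⟩
    exact hf.iterate i hx
  · rwa [Function.iterate_injOn_Iio_minimalPeriod.ncard_image, Set.ncard_Iio_nat]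

theorem period_eq_of_prime {M X : Type*} [Monoid M] [MulAction M X] {p : ℕ} [Fact p.Prime]
    {a : M} {x : X} (hp : a ^ p • x = x) (hx : a • x ≠ x) : MulAction.period a x = p :=
  Function.minimalPeriod_eq_prime (MulAction.isPeriodicPt_smul_iff.mpr hp) hx

theorem eq_image_pow_smul_of_ncard_le_period {G X : Type*} [Group G] [MulAction G X]
    {q n : ℕ} [Fact q.Prime] {a t : G} (ht : t ^ q ^ n = 1) {x₀ : X}
    (hfix : ∀ x : X, t • x = x → x = x₀) {S : Set X} (hS : S.ncard ≤ MulAction.period a x₀)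
    (hq : ¬q ∣ S.ncard) (hainv : a • S = S) (htinv : t • S = S) :
    S = (a ^ · • x₀) '' Set.Iio (MulAction.period a x₀) := by
  obtain ⟨x, hxS, htx⟩ := exists_mem_smul_eq_self_of_not_dvd_ncard ht htinv hq
  obtain rfl := hfix x htx
  have hfin : S.Finite := Set.finite_of_ncard_ne_zero fun h ↦ hq (h ▸ dvd_zero q)
  have hmaps : Set.MapsTo (a • ·) S S := fun _ hy ↦ hainv ▸ Set.smul_mem_smul_set hy
  simpa only [smul_iterate_apply, ← MulAction.period_eq_minimalPeriod] using
    (image_iterate_Iio_minimalPeriod_eq hfin hmaps hxS hS).symm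

theorem unique_invariant_triple_general {G X : Type*} [Group G] [MulAction G X]
    {a t : G} {x₀ : X} (ha : a ^ 3 • x₀ = x₀) (hax : a • x₀ ≠ x₀) {n : ℕ} (ht : t ^ 2 ^ n = 1)
    (hfix : ∀ x : X, t • x = x → x = x₀) {S : Set X} (hS : S.ncard = 3) (hainv : a • S = S)
    (htinv : t • S = S) : S = {x₀, a • x₀, a ^ 2 • x₀} := by
  have hper : MulAction.period a x₀ = 3 := period_eq_of_prime ha hax
  have hIio : Set.Iio 3 = {0, 1, 2} := by grind
  have hcycle := eq_image_pow_smul_of_ncard_le_period ht hfix (hS.trans hper.symm).le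
    (by simp [hS]) hainv htinv
  simpa only [hper, hIio, Set.image_insert_eq, Set.image_singleton, pow_zero, pow_one, one_smul]
    using hcycle

/-- In a 3-sharp action, if `a` has order 3 and acts freely and the involution `t` fixes
exactly the point `x₀`, then the only 3-element subset invariant under both `a` and `t` is
`{x₀, a • x₀, a² • x₀}`. -/
theorem unique_invariant_triple {G X : Type*} [Group G] [MulAction G X]
    (hG : ThreeSharp G X)
    (a : G) (ha : orderOf a = 3) (hafree : ∀ x : X, a • x ≠ x)
    (t : G) (ht : orderOf t = 2) (x₀ : X) (hfix : ∀ x : X, t • x = x ↔ x = x₀)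
    (S : Set X) (hS : S.ncard = 3) (hainv : a • S = S) (htinv : t • S = S) :
    S = {x₀, a • x₀, a ^ 2 • x₀} :=
  unique_invariant_triple_general (by rw [← ha, pow_orderOf_eq_one, one_smul]) (hafree x₀)
    (n := 1) (by rw [pow_one, ← ht, pow_orderOf_eq_one]) (fun x ↦ (hfix x).mp) hS hainv htinv
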